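/- arXiv:1404.7593 — 3 statements merged into one kernel-verified Lean document; each statement's English description precedes it below -/
import Mathlib

section
/- Monotone growth of the particular solution started at M: Let M be a symmetric n×n real matrix such that γ²·I − Bᵀ(R_k(M))B is positive definite for every k ≥ 0 and such that R(M) − M is positive definite. Then for every k ≥ 0 one has R_{k+1}(M) ≥ R_k(M) in the Loewner order, and for every k ≥ 1 the matrix R_k(M) − M is positive definite. -/
open Matrix

/-- The Riccati operator `R(P) = Φ + AᵀPA + AᵀPB(γ²I − BᵀPB)⁻¹BᵀPA`. -/
noncomputable def Ric {n m : ℕ} (A : Matrix (Fin n) (Fin n) ℝ) (B : Matrix (Fin n) (Fin m) ℝ)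
    (Φ : Matrix (Fin n) (Fin n) ℝ) (γ : ℝ) (P : Matrix (Fin n) (Fin n) ℝ) :
    Matrix (Fin n) (Fin n) ℝ :=
  Φ + Aᵀ * P * A +
    Aᵀ * P * B * (γ ^ 2 • (1 : Matrix (Fin m) (Fin m) ℝ) - Bᵀ * P * B)⁻¹ * Bᵀ * P * A

lemma ric_complete_square {n m : ℕ}
    (A : Matrix (Fin n) (Fin n) ℝ) (B : Matrix (Fin n) (Fin m) ℝ)
    (Φ : Matrix (Fin n) (Fin n) ℝ) (γ : ℝ) (Q : Matrix (Fin n) (Fin n) ℝ) (hQ : Qᵀ = Q)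
    (S : Matrix (Fin m) (Fin m) ℝ)
    (hS : S = γ ^ 2 • (1 : Matrix (Fin m) (Fin m) ℝ) - Bᵀ * Q * B)
    (hSp : S.PosDef) (K : Matrix (Fin m) (Fin n) ℝ) :
    Ric A B Φ γ Q = Φ + (A + B * K)ᵀ * Q * (A + B * K) - γ ^ 2 • (Kᵀ * K)
      + (K - S⁻¹ * (Bᵀ * Q * A))ᵀ * S * (K - S⁻¹ * (Bᵀ * Q * A)) := by
  have hdet : IsUnit S.det := (Matrix.isUnit_iff_isUnit_det S).1 hSp.isUnit
  have hST : Sᵀ = S := by simpa using hSp.isHermitian.eq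
  have e1 : S * (S⁻¹ * (Bᵀ * Q * A)) = Bᵀ * Q * A := by
    rw [← Matrix.mul_assoc, Matrix.mul_nonsing_inv _ hdet, Matrix.one_mul]
  have e2 : (S⁻¹ * (Bᵀ * Q * A))ᵀ * S = Aᵀ * Q * B := by
    rw [← hST, ← Matrix.transpose_mul, hST, e1]
    simp [Matrix.transpose_mul, hQ, Matrix.mul_assoc]
  have e3 : (K - S⁻¹ * (Bᵀ * Q * A))ᵀ * S * (K - S⁻¹ * (Bᵀ * Q * A))
      = Kᵀ * S * K - Kᵀ * (Bᵀ * Q * A) - Aᵀ * Q * B * K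
        + Aᵀ * Q * B * (S⁻¹ * (Bᵀ * Q * A)) := by
    rw [Matrix.transpose_sub, Matrix.sub_mul, e2, Matrix.mul_sub, Matrix.sub_mul, Matrix.sub_mul,
      Matrix.mul_assoc Kᵀ S (S⁻¹ * _), e1]
    abel
  have e4 : Kᵀ * S * K = γ ^ 2 • (Kᵀ * K) - Kᵀ * Bᵀ * Q * B * K := by
    rw [hS]
    simp [Matrix.mul_sub, Matrix.sub_mul, Matrix.mul_assoc]
  rw [e3, e4, Ric, ← hS]
  simp only [Matrix.transpose_add, Matrix.transpose_mul, Matrix.add_mul, Matrix.mul_add,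
    Matrix.mul_assoc]
  abel

lemma ric_symm {n m : ℕ}
    (A : Matrix (Fin n) (Fin n) ℝ) (B : Matrix (Fin n) (Fin m) ℝ)
    (Φ : Matrix (Fin n) (Fin n) ℝ) (hΦ : Φᵀ = Φ) (γ : ℝ) (Q : Matrix (Fin n) (Fin n) ℝ)
    (hQ : Qᵀ = Q) : (Ric A B Φ γ Q)ᵀ = Ric A B Φ γ Q := by
  simp [Ric, Matrix.transpose_mul, Matrix.transpose_nonsing_inv, hQ, hΦ, Matrix.mul_assoc]

lemma ric_mono {n m : ℕ}
    (A : Matrix (Fin n) (Fin n) ℝ) (B : Matrix (Fin n) (Fin m) ℝ)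
    (Φ : Matrix (Fin n) (Fin n) ℝ) (γ : ℝ) (P Q : Matrix (Fin n) (Fin n) ℝ)
    (hP : Pᵀ = P) (hQ : Qᵀ = Q)
    (hSP : (γ ^ 2 • (1 : Matrix (Fin m) (Fin m) ℝ) - Bᵀ * P * B).PosDef)
    (hSQ : (γ ^ 2 • (1 : Matrix (Fin m) (Fin m) ℝ) - Bᵀ * Q * B).PosDef)
    (h : (Q - P).PosSemidef) : (Ric A B Φ γ Q - Ric A B Φ γ P).PosSemidef := by
  obtain ⟨K, hK⟩ : ∃ K, K = (γ ^ 2 • (1 : Matrix (Fin m) (Fin m) ℝ) - Bᵀ * P * B)⁻¹ *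
    (Bᵀ * P * A) := ⟨_, rfl⟩
  rw [ric_complete_square A B Φ γ Q hQ _ rfl hSQ K, ric_complete_square A B Φ γ P hP _ rfl hSP K,
    ← hK]
  obtain ⟨D, hD⟩ : ∃ D, D = K - (γ ^ 2 • (1 : Matrix (Fin m) (Fin m) ℝ) - Bᵀ * Q * B)⁻¹ *
    (Bᵀ * Q * A) := ⟨_, rfl⟩
  rw [← hD]
  have h1 := h.conjTranspose_mul_mul_same (A + B * K)
  have h2 := hSQ.posSemidef.conjTranspose_mul_mul_same D
  have h3 := h1.add h2
  rw [Matrix.conjTranspose_eq_transpose_of_trivial,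
    Matrix.conjTranspose_eq_transpose_of_trivial, Matrix.mul_sub, Matrix.sub_mul] at h3
  convert h3 using 1
  simp only [sub_self, Matrix.mul_zero, add_zero]
  abel

/-- Monotone growth of the particular solution started at `M`. -/
theorem riccati_iterate_from_M_monotone {n m : ℕ}
    (A : Matrix (Fin n) (Fin n) ℝ) (B : Matrix (Fin n) (Fin m) ℝ)
    (Φ : Matrix (Fin n) (Fin n) ℝ) (hΦsymm : Φ.IsSymm) (hΦ : Φ.PosDef)
    (γ : ℝ) (hγ : 0 < γ)
    (M : Matrix (Fin n) (Fin n) ℝ) (hMsymm : M.IsSymm)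
    (hM1 : ∀ k : ℕ,
      (γ ^ 2 • (1 : Matrix (Fin m) (Fin m) ℝ) - Bᵀ * ((Ric A B Φ γ)^[k] M) * B).PosDef)
    (hM2 : (Ric A B Φ γ M - M).PosDef) :
    (∀ k : ℕ, ((Ric A B Φ γ)^[k + 1] M - (Ric A B Φ γ)^[k] M).PosSemidef) ∧
      (∀ k : ℕ, 1 ≤ k → ((Ric A B Φ γ)^[k] M - M).PosDef) := by
  have hs : ∀ k : ℕ, ((Ric A B Φ γ)^[k] M)ᵀ = (Ric A B Φ γ)^[k] M := by
    intro k
    induction k with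
    | zero => exact hMsymm
    | succ k ih =>
      rw [Function.iterate_succ_apply']
      exact ric_symm A B Φ hΦsymm γ _ ih
  have h1 : ∀ k : ℕ, ((Ric A B Φ γ)^[k + 1] M - (Ric A B Φ γ)^[k] M).PosSemidef := by
    intro k
    induction k with
    | zero => exact hM2.posSemidef
    | succ k ih =>
      have := ric_mono A B Φ γ _ _ (hs k) (hs (k + 1)) (hM1 k) (hM1 (k + 1)) ih
      rwa [← Function.iterate_succ_apply' (Ric A B Φ γ),
        ← Function.iterate_succ_apply' (Ric A B Φ γ)] at this
  refine ⟨h1, fun k hk => ?_⟩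
  induction k, hk using Nat.le_induction with
  | base => exact hM2
  | succ k hk ih =>
    have := ih.add_posSemidef (h1 k)
    rwa [add_comm, sub_add_sub_cancel] at this
end

section
/- Quadratic form of the value function: Let P0 be a symmetric n×n real matrix, let k ≥ 0, and suppose γ²·I − Bᵀ(R_i(P0))B is positive definite for every 0 ≤ i ≤ k−1. Then for every x ∈ ℝⁿ the value function satisfies W_k(x) = (1/2)xᵀ(R_k(P0))x; in particular the supremum defining W_k(x) is finite. -/
open Matrix

/-- The state trajectory `x₀ = x`, `x_{i+1} = A x_i + B w_i`. -/
noncomputable def traj {n m : ℕ} (A : Matrix (Fin n) (Fin n) ℝ) (B : Matrix (Fin n) (Fin m) ℝ)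
    (x : Fin n → ℝ) (w : ℕ → Fin m → ℝ) : ℕ → Fin n → ℝ
  | 0 => x
  | i + 1 => A *ᵥ traj A B x w i + B *ᵥ w i

/-- The total payoff `J_k(x; w) = Σ_{i<k} (½x_iᵀΦx_i − (γ²/2)|w_i|²) + ½x_kᵀP₀x_k`. -/
noncomputable def payoff {n m : ℕ} (A : Matrix (Fin n) (Fin n) ℝ) (B : Matrix (Fin n) (Fin m) ℝ)
    (Φ : Matrix (Fin n) (Fin n) ℝ) (γ : ℝ) (P₀ : Matrix (Fin n) (Fin n) ℝ) (k : ℕ)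
    (x : Fin n → ℝ) (w : ℕ → Fin m → ℝ) : ℝ :=
  (∑ i ∈ Finset.range k,
      ((1 / 2) * (traj A B x w i ⬝ᵥ Φ *ᵥ traj A B x w i) - γ ^ 2 / 2 * (w i ⬝ᵥ w i))) +
    (1 / 2) * (traj A B x w k ⬝ᵥ P₀ *ᵥ traj A B x w k)

theorem Ric_isSymm {n m : ℕ} (A : Matrix (Fin n) (Fin n) ℝ) (B : Matrix (Fin n) (Fin m) ℝ)
    (Φ : Matrix (Fin n) (Fin n) ℝ) (hΦ : Φ.IsSymm) (γ : ℝ) (P : Matrix (Fin n) (Fin n) ℝ)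
    (hP : P.IsSymm) : (Ric A B Φ γ P).IsSymm := by
  have hP' : Pᵀ = P := hP
  have hΦ' : Φᵀ = Φ := hΦ
  unfold Matrix.IsSymm Ric
  simp only [transpose_add, transpose_mul, transpose_nonsing_inv, transpose_sub, transpose_smul,
    transpose_one, transpose_transpose, hP', hΦ', Matrix.mul_assoc]

theorem step_identity {n m : ℕ} (A : Matrix (Fin n) (Fin n) ℝ) (B : Matrix (Fin n) (Fin m) ℝ)
    (Φ : Matrix (Fin n) (Fin n) ℝ) (γ : ℝ) (P : Matrix (Fin n) (Fin n) ℝ)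
    (hP : P.IsSymm) (M : Matrix (Fin m) (Fin m) ℝ)
    (hM : M = γ ^ 2 • (1 : Matrix (Fin m) (Fin m) ℝ) - Bᵀ * P * B)
    (hpd : M.PosDef) (x : Fin n → ℝ) (w v : Fin m → ℝ)
    (hv : v = M⁻¹ *ᵥ (Bᵀ *ᵥ (P *ᵥ (A *ᵥ x)))) :
    x ⬝ᵥ Φ *ᵥ x - γ ^ 2 * (w ⬝ᵥ w) + (A *ᵥ x + B *ᵥ w) ⬝ᵥ P *ᵥ (A *ᵥ x + B *ᵥ w)
      = x ⬝ᵥ (Ric A B Φ γ P) *ᵥ x - (w - v) ⬝ᵥ M *ᵥ (w - v) := by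
  have hP' : Pᵀ = P := hP
  have key : ∀ {a b : ℕ} (N : Matrix (Fin a) (Fin b) ℝ) (p : Fin a → ℝ) (q : Fin b → ℝ),
      p ⬝ᵥ N *ᵥ q = (Nᵀ *ᵥ p) ⬝ᵥ q := by
    intro a b N p q
    rw [dotProduct_mulVec, mulVec_transpose]
  have hMs : Mᵀ = M := by
    have := hpd.isHermitian.eq
    simpa [conjTranspose_eq_transpose_of_trivial] using this
  have hMv : M *ᵥ v = Bᵀ *ᵥ (P *ᵥ (A *ᵥ x)) := by
    have hu : IsUnit M.det := hpd.det_pos.ne'.isUnit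
    rw [hv, mulVec_mulVec, Matrix.mul_nonsing_inv _ hu, one_mulVec]
  have hR : x ⬝ᵥ (Ric A B Φ γ P) *ᵥ x
      = x ⬝ᵥ Φ *ᵥ x + (A *ᵥ x) ⬝ᵥ P *ᵥ (A *ᵥ x) + v ⬝ᵥ M *ᵥ v := by
    have e : (Ric A B Φ γ P) *ᵥ x
        = Φ *ᵥ x + Aᵀ *ᵥ (P *ᵥ (A *ᵥ x)) + Aᵀ *ᵥ (P *ᵥ (B *ᵥ v)) := by
      unfold Ric
      rw [← hM, hv]
      simp only [add_mulVec, ← mulVec_mulVec]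
    rw [e, dotProduct_add, dotProduct_add, key Aᵀ, key Aᵀ, transpose_transpose, hMv,
      key P _ (B *ᵥ v), hP', key B, dotProduct_comm v]
  have hw : w ⬝ᵥ M *ᵥ w = γ ^ 2 * (w ⬝ᵥ w) - (B *ᵥ w) ⬝ᵥ P *ᵥ (B *ᵥ w) := by
    rw [hM, sub_mulVec, smul_mulVec, one_mulVec, ← mulVec_mulVec, ← mulVec_mulVec,
      dotProduct_sub, dotProduct_smul, key Bᵀ, transpose_transpose, smul_eq_mul]
  have h1 : v ⬝ᵥ M *ᵥ w = w ⬝ᵥ M *ᵥ v := by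
    rw [key, hMs, dotProduct_comm]
  have h2 : w ⬝ᵥ M *ᵥ v = (B *ᵥ w) ⬝ᵥ P *ᵥ (A *ᵥ x) := by
    rw [hMv, key Bᵀ, transpose_transpose]
  have h3 : (A *ᵥ x) ⬝ᵥ P *ᵥ (B *ᵥ w) = (B *ᵥ w) ⬝ᵥ P *ᵥ (A *ᵥ x) := by
    rw [key, hP', dotProduct_comm]
  rw [hR]
  simp only [mulVec_add, mulVec_sub, dotProduct_add, dotProduct_sub, add_dotProduct,
    sub_dotProduct]
  linarith

theorem traj_congr {n m : ℕ} (A : Matrix (Fin n) (Fin n) ℝ) (B : Matrix (Fin n) (Fin m) ℝ)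
    (x : Fin n → ℝ) (w w' : ℕ → Fin m → ℝ) (k : ℕ) (h : ∀ i < k, w i = w' i) :
    traj A B x w k = traj A B x w' k := by
  induction k with
  | zero => rfl
  | succ k ih =>
    simp only [traj]
    rw [ih (fun i hi => h i (by omega)), h k (by omega)]

theorem payoff_congr {n m : ℕ} (A : Matrix (Fin n) (Fin n) ℝ) (B : Matrix (Fin n) (Fin m) ℝ)
    (Φ : Matrix (Fin n) (Fin n) ℝ) (γ : ℝ) (P : Matrix (Fin n) (Fin n) ℝ)
    (x : Fin n → ℝ) (w w' : ℕ → Fin m → ℝ) (k : ℕ) (h : ∀ i < k, w i = w' i) :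
    payoff A B Φ γ P k x w = payoff A B Φ γ P k x w' := by
  unfold payoff
  rw [traj_congr A B x w w' k h]
  congr 1
  refine Finset.sum_congr rfl fun i hi => ?_
  have hi' := Finset.mem_range.1 hi
  rw [traj_congr A B x w w' i (fun j hj => h j (by omega)), h i hi']

theorem payoff_succ {n m : ℕ} (A : Matrix (Fin n) (Fin n) ℝ) (B : Matrix (Fin n) (Fin m) ℝ)
    (Φ : Matrix (Fin n) (Fin n) ℝ) (γ : ℝ) (P : Matrix (Fin n) (Fin n) ℝ)
    (hP : P.IsSymm) (M : Matrix (Fin m) (Fin m) ℝ)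
    (hM : M = γ ^ 2 • (1 : Matrix (Fin m) (Fin m) ℝ) - Bᵀ * P * B)
    (hpd : M.PosDef) (x : Fin n → ℝ) (w : ℕ → Fin m → ℝ) (k : ℕ) (v : Fin m → ℝ)
    (hv : v = M⁻¹ *ᵥ (Bᵀ *ᵥ (P *ᵥ (A *ᵥ traj A B x w k)))) :
    payoff A B Φ γ P (k + 1) x w
      = payoff A B Φ γ (Ric A B Φ γ P) k x w - (1 / 2) * ((w k - v) ⬝ᵥ M *ᵥ (w k - v)) := by
  have h := step_identity A B Φ γ P hP M hM hpd (traj A B x w k) (w k) v hv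
  unfold payoff
  rw [Finset.sum_range_succ]
  simp only [traj]
  linarith

theorem value_aux {n m : ℕ}
    (A : Matrix (Fin n) (Fin n) ℝ) (B : Matrix (Fin n) (Fin m) ℝ)
    (Φ : Matrix (Fin n) (Fin n) ℝ) (hΦ : Φ.IsSymm) (γ : ℝ) (x : Fin n → ℝ) (k : ℕ) :
    ∀ P : Matrix (Fin n) (Fin n) ℝ, P.IsSymm →
    (∀ i < k,
      (γ ^ 2 • (1 : Matrix (Fin m) (Fin m) ℝ) - Bᵀ * ((Ric A B Φ γ)^[i] P) * B).PosDef) →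
    IsGreatest (Set.range fun w : ℕ → Fin m → ℝ => payoff A B Φ γ P k x w)
      ((1 / 2) * (x ⬝ᵥ ((Ric A B Φ γ)^[k] P) *ᵥ x)) := by
  induction k with
  | zero =>
    intro P _ _
    refine ⟨⟨0, by simp [payoff, traj]⟩, ?_⟩
    rintro _ ⟨w, rfl⟩
    simp [payoff, traj]
  | succ k ih =>
    intro P hP h
    have hpd := h 0 (by omega)
    simp only [Function.iterate_zero, id] at hpd
    obtain ⟨⟨w, hw⟩, hub⟩ := ih (Ric A B Φ γ P) (Ric_isSymm A B Φ hΦ γ P hP)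
      (fun i hi => h (i + 1) (by omega))
    simp only at hw
    rw [Function.iterate_succ_apply]
    constructor
    · set v := (γ ^ 2 • (1 : Matrix (Fin m) (Fin m) ℝ) - Bᵀ * P * B)⁻¹ *ᵥ
        (Bᵀ *ᵥ (P *ᵥ (A *ᵥ traj A B x w k))) with hv
      have hc : ∀ i < k, Function.update w k v i = w i := fun i hi =>
        Function.update_of_ne (by omega) _ _
      refine ⟨Function.update w k v, ?_⟩
      simp only
      rw [payoff_succ A B Φ γ P hP _ rfl hpd x _ k v
        (by rw [traj_congr A B x _ w k hc]), payoff_congr A B Φ γ _ x _ w k hc, hw]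
      simp
    · rintro _ ⟨w', rfl⟩
      simp only
      rw [payoff_succ A B Φ γ P hP _ rfl hpd x w' k _ rfl]
      have h1 := hub ⟨w', rfl⟩
      simp only at h1
      have h2 := hpd.posSemidef.dotProduct_mulVec_nonneg (w' k - (γ ^ 2 •
        (1 : Matrix (Fin m) (Fin m) ℝ) - Bᵀ * P * B)⁻¹ *ᵥ
        (Bᵀ *ᵥ (P *ᵥ (A *ᵥ traj A B x w' k))))
      rw [star_trivial] at h2
      linarith

/-- Quadratic form of the value function: `W_k(x) = ½xᵀR_k(P₀)x`, the supremum
defining `W_k(x)` being finite (note the payoff only depends on `w₀,…,w_{k−1}`). -/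
theorem value_function_quadratic {n m : ℕ}
    (A : Matrix (Fin n) (Fin n) ℝ) (B : Matrix (Fin n) (Fin m) ℝ)
    (Φ : Matrix (Fin n) (Fin n) ℝ) (hΦsymm : Φ.IsSymm) (hΦ : Φ.PosDef)
    (γ : ℝ) (hγ : 0 < γ)
    (P₀ : Matrix (Fin n) (Fin n) ℝ) (hP₀symm : P₀.IsSymm) (k : ℕ)
    (hP₀ : ∀ i < k,
      (γ ^ 2 • (1 : Matrix (Fin m) (Fin m) ℝ) - Bᵀ * ((Ric A B Φ γ)^[i] P₀) * B).PosDef)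
    (x : Fin n → ℝ) :
    IsLUB (Set.range fun w : ℕ → Fin m → ℝ => payoff A B Φ γ P₀ k x w)
      ((1 / 2) * (x ⬝ᵥ ((Ric A B Φ γ)^[k] P₀) *ᵥ x)) := by
  exact (value_aux A B Φ hΦsymm γ x k P₀ hP₀symm hP₀).isLUB
end

section
/- Semigroup property of the primal kernels (Theorem on propagation of S_k and Λ_k): Assume M is a symmetric n×n real matrix satisfying: γ²·I − Bᵀ(R_k(M))B is positive definite for all k ≥ 0, R(M) − M is positive definite, and MB(γ²·I − BᵀMB)⁻¹BᵀM is positive definite. Fix k₁, k₂ ≥ 1 and suppose that for k ∈ {k₁, k₂, k₁+k₂} the auxiliary value function Ŝ_k(x,z) := (S_k ψ(·,z))(x) is finite and quadratic, Ŝ_k(x,z) = (1/2)[x;z]ᵀQ_k[x;z], with Q_k²² − M positive definite, and define the primal kernel S_k(x,y) := −sup_{z∈ℝⁿ} { (1/2)(z−y)ᵀM(z−y) − Ŝ_k(x,z) }, which is quadratic, S_k(x,y) = (1/2)[x;y]ᵀΛ_k[x;y], with symmetric Hessian Λ_k. Suppose further Λ_{k₁}²² + Λ_{k₂}¹¹ is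 negative definite. Then for all x,y ∈ ℝⁿ, S_{k₁+k₂}(x,y) = sup_{ρ∈ℝⁿ} { S_{k₁}(x,ρ) + S_{k₂}(ρ,y) }, and consequently Λ_{k₁+k₂} = Λ_{k₁} ⊛ Λ_{k₂}. -/
open Matrix

/-- The one-step dynamic programming evolution operator on extended-real-valued functions:
`(Sφ)(x) = sup_w {½xᵀΦx − (γ²/2)|w|² + φ(Ax+Bw)}`. -/
noncomputable def DP {n m : ℕ} (A : Matrix (Fin n) (Fin n) ℝ) (B : Matrix (Fin n) (Fin m) ℝ)
    (Φ : Matrix (Fin n) (Fin n) ℝ) (γ : ℝ) (φ : (Fin n → ℝ) → EReal) :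
    (Fin n → ℝ) → EReal :=
  fun x => ⨆ w : Fin m → ℝ,
    (((1 / 2) * (x ⬝ᵥ Φ *ᵥ x) - γ ^ 2 / 2 * (w ⬝ᵥ w) : ℝ) : EReal) + φ (A *ᵥ x + B *ᵥ w)

/-- The primal-space kernel `S_k(x,y) = −sup_z {½(z−y)ᵀM(z−y) − Ŝ_k(x,z)}` expressed via
the quadratic form `Ŝ_k(x,z) = ½[x;z]ᵀQ_k[x;z]`. -/
noncomputable def primalKernel {n : ℕ} (M : Matrix (Fin n) (Fin n) ℝ)
    (Q : Matrix (Fin n ⊕ Fin n) (Fin n ⊕ Fin n) ℝ) (x y : Fin n → ℝ) : ℝ :=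
  -(⨆ z : Fin n → ℝ,
      (1 / 2) * ((z - y) ⬝ᵥ M *ᵥ (z - y)) -
        (1 / 2) * (Sum.elim x z ⬝ᵥ Q *ᵥ Sum.elim x z))

/-- The `⊛` operation on symmetric `2n×2n` matrices, defined blockwise with
`Π = Θ₁²² + Θ₂¹¹`. -/
noncomputable def starProd {n : ℕ} (T₁ T₂ : Matrix (Fin n ⊕ Fin n) (Fin n ⊕ Fin n) ℝ) :
    Matrix (Fin n ⊕ Fin n) (Fin n ⊕ Fin n) ℝ :=
  fromBlocks
    (T₁.toBlocks₁₁ - T₁.toBlocks₁₂ * (T₁.toBlocks₂₂ + T₂.toBlocks₁₁)⁻¹ * T₁.toBlocks₂₁)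
    (-(T₁.toBlocks₁₂ * (T₁.toBlocks₂₂ + T₂.toBlocks₁₁)⁻¹ * T₂.toBlocks₁₂))
    (-(T₂.toBlocks₂₁ * (T₁.toBlocks₂₂ + T₂.toBlocks₁₁)⁻¹ * T₁.toBlocks₂₁))
    (T₂.toBlocks₂₂ - T₂.toBlocks₂₁ * (T₁.toBlocks₂₂ + T₂.toBlocks₁₁)⁻¹ * T₂.toBlocks₁₂)

theorem dotM_symm {n : ℕ} {N : Matrix (Fin n) (Fin n) ℝ} (hN : N.IsSymm) (u v : Fin n → ℝ) :
    u ⬝ᵥ N *ᵥ v = v ⬝ᵥ N *ᵥ u := by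
  rw [dotProduct_mulVec, ← mulVec_transpose, hN.eq, dotProduct_comm]

theorem dotM_tr {n : ℕ} (N : Matrix (Fin n) (Fin n) ℝ) (u v : Fin n → ℝ) :
    u ⬝ᵥ Nᵀ *ᵥ v = v ⬝ᵥ N *ᵥ u := by
  rw [dotProduct_mulVec, vecMul_transpose, dotProduct_comm]

/-- quadratic function with gradient `g` and Hessian `N` -/
structure HasQ {n : ℕ} (q : (Fin n → ℝ) → ℝ) (g : (Fin n → ℝ) → (Fin n → ℝ))
    (N : Matrix (Fin n) (Fin n) ℝ) : Prop where
  exp : ∀ y v, q (y + v) = q y + v ⬝ᵥ g y + (1 / 2) * (v ⬝ᵥ N *ᵥ v)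
  lin : ∀ y v, g (y + v) = g y + N *ᵥ v

theorem HasQ.neg {n : ℕ} {q : (Fin n → ℝ) → ℝ} {g N} (h : HasQ q g N) :
    HasQ (fun y => - q y) (fun y => - g y) (-N) where
  exp y v := by
    simp only [h.exp y v, neg_mulVec, dotProduct_neg]; ring
  lin y v := by
    simp only [h.lin y v, neg_mulVec]; abel

theorem HasQ.add {n : ℕ} {q q' : (Fin n → ℝ) → ℝ} {g N g' N'} (h : HasQ q g N)
    (h' : HasQ q' g' N') :
    HasQ (fun y => q y + q' y) (fun y => g y + g' y) (N + N') where
  exp y v := by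
    simp only [h.exp y v, h'.exp y v, add_mulVec, dotProduct_add]; ring
  lin y v := by
    simp only [h.lin y v, h'.lin y v, add_mulVec]; abel

theorem hasQ_psi {n : ℕ} {M : Matrix (Fin n) (Fin n) ℝ} (hM : M.IsSymm) (z : Fin n → ℝ) :
    HasQ (fun y => (1 / 2) * ((y - z) ⬝ᵥ M *ᵥ (y - z))) (fun y => M *ᵥ (y - z)) M where
  exp y v := by
    have : y + v - z = (y - z) + v := by abel
    simp only [this, mulVec_add, add_dotProduct, dotProduct_add, dotM_symm hM (y - z) v]
    ring
  lin y v := by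
    have : y + v - z = (y - z) + v := by abel
    simp only [this, mulVec_add]

theorem qform {n : ℕ} {Q : Matrix (Fin n ⊕ Fin n) (Fin n ⊕ Fin n) ℝ} (hQ : Q.IsSymm)
    (x z : Fin n → ℝ) :
    Sum.elim x z ⬝ᵥ Q *ᵥ Sum.elim x z =
      x ⬝ᵥ Q.toBlocks₁₁ *ᵥ x + 2 * (x ⬝ᵥ Q.toBlocks₁₂ *ᵥ z) + z ⬝ᵥ Q.toBlocks₂₂ *ᵥ z := by
  have h21 : Q.toBlocks₂₁ = Q.toBlocks₁₂ᵀ := by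
    ext i j; exact hQ.apply _ _
  conv_lhs => rw [← fromBlocks_toBlocks Q]
  rw [fromBlocks_mulVec, h21]
  simp only [Sum.elim_comp_inl, Sum.elim_comp_inr, sumElim_dotProduct_sumElim, dotProduct_add,
    dotM_tr]
  ring

theorem b11 {n : ℕ} {Q : Matrix (Fin n ⊕ Fin n) (Fin n ⊕ Fin n) ℝ} (hQ : Q.IsSymm) :
    Q.toBlocks₁₁.IsSymm := by ext i j; exact hQ.apply _ _
theorem b22 {n : ℕ} {Q : Matrix (Fin n ⊕ Fin n) (Fin n ⊕ Fin n) ℝ} (hQ : Q.IsSymm) :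
    Q.toBlocks₂₂.IsSymm := by ext i j; exact hQ.apply _ _
theorem b21 {n : ℕ} {Q : Matrix (Fin n ⊕ Fin n) (Fin n ⊕ Fin n) ℝ} (hQ : Q.IsSymm) :
    Q.toBlocks₂₁ = Q.toBlocks₁₂ᵀ := by ext i j; exact hQ.apply _ _

theorem hasQ_snd {n : ℕ} {Q : Matrix (Fin n ⊕ Fin n) (Fin n ⊕ Fin n) ℝ} (hQ : Q.IsSymm)
    (x : Fin n → ℝ) :
    HasQ (fun z => (1 / 2) * (Sum.elim x z ⬝ᵥ Q *ᵥ Sum.elim x z))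
      (fun z => Q.toBlocks₂₁ *ᵥ x + Q.toBlocks₂₂ *ᵥ z) Q.toBlocks₂₂ where
  exp y v := by
    simp only [qform hQ, b21 hQ, mulVec_add, add_dotProduct, dotProduct_add,
      dotM_symm (b22 hQ) y v, dotM_tr]
    ring
  lin y v := by
    simp only [mulVec_add]; abel

theorem hasQ_fst {n : ℕ} {Q : Matrix (Fin n ⊕ Fin n) (Fin n ⊕ Fin n) ℝ} (hQ : Q.IsSymm)
    (z : Fin n → ℝ) :
    HasQ (fun x => (1 / 2) * (Sum.elim x z ⬝ᵥ Q *ᵥ Sum.elim x z))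
      (fun x => Q.toBlocks₁₁ *ᵥ x + Q.toBlocks₁₂ *ᵥ z) Q.toBlocks₁₁ where
  exp y v := by
    simp only [qform hQ, mulVec_add, add_dotProduct, dotProduct_add,
      dotM_symm (b11 hQ) y v]
    ring
  lin y v := by
    simp only [mulVec_add]; abel

theorem HasQ.max_of_crit {n : ℕ} {q : (Fin n → ℝ) → ℝ} {g N} (h : HasQ q g N)
    (hN : ∀ v, v ⬝ᵥ N *ᵥ v ≤ 0) {y : Fin n → ℝ} (hy : g y = 0) (y' : Fin n → ℝ) :
    q y' ≤ q y := by
  have := h.exp y (y' - y)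
  rw [add_sub_cancel, hy, dotProduct_zero] at this
  have := hN (y' - y)
  linarith

theorem pd_nonneg {n : ℕ} {N : Matrix (Fin n) (Fin n) ℝ} (hN : N.PosDef) (v : Fin n → ℝ) :
    0 ≤ v ⬝ᵥ N *ᵥ v := by
  simpa using hN.posSemidef.dotProduct_mulVec_nonneg v

theorem HasQ.crit {n : ℕ} {q : (Fin n → ℝ) → ℝ} {g N} (h : HasQ q g N)
    (hN : IsUnit N) : g (-(N⁻¹ *ᵥ g 0)) = 0 := by
  have := h.lin 0 (-(N⁻¹ *ᵥ g 0))
  rw [zero_add] at this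
  rw [this, mulVec_neg, mulVec_mulVec, mul_nonsing_inv _ ((isUnit_iff_isUnit_det _).1 hN)]
  simp

theorem HasQ.crit_val {n : ℕ} {q : (Fin n → ℝ) → ℝ} {g N} (h : HasQ q g N)
    (hN : IsUnit N) : q (-(N⁻¹ *ᵥ g 0)) = q 0 - (1 / 2) * ((N⁻¹ *ᵥ g 0) ⬝ᵥ g 0) := by
  have := h.exp (-(N⁻¹ *ᵥ g 0)) (N⁻¹ *ᵥ g 0)
  rw [h.crit hN, neg_add_cancel, dotProduct_zero, mulVec_mulVec,
    mul_nonsing_inv _ ((isUnit_iff_isUnit_det _).1 hN), one_mulVec] at this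
  linarith

theorem HasQ.exists_max {n : ℕ} {q : (Fin n → ℝ) → ℝ} {g N} (h : HasQ q g N)
    (hN : (-N).PosDef) : ∃ y, ∀ y', q y' ≤ q y := by
  refine ⟨_, h.max_of_crit ?_ (h.crit ?_)⟩
  · intro v
    have := pd_nonneg hN v
    rw [neg_mulVec, dotProduct_neg] at this
    linarith
  · simpa using hN.isUnit.neg

theorem real_aux {c C h : ℝ} (H : ∀ t : ℝ, c + (1 / 2) * (t * (t * h)) ≤ C) : h ≤ 0 := by
  by_contra hh
  push Not at hh
  have h1 := H (2 * (|C - c| + 1) / h + 1)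
  have h2 : 0 ≤ |C - c| := abs_nonneg _
  have h3 := le_abs_self (C - c)
  have h4 : (2 * (|C - c| + 1) / h + 1) * h = 2 * (|C - c| + 1) + h := by field_simp
  rw [h4] at h1
  have h5 : 0 ≤ 2 * (|C - c| + 1) / h := by positivity
  nlinarith [mul_nonneg h5 (by positivity : 0 ≤ 2 * (|C - c| + 1) + h)]

/-- duality: every point is a maximizer for a suitable `z`. -/
theorem HasQ.dual {n : ℕ} {q : (Fin n → ℝ) → ℝ} {g N} (h : HasQ q g N)
    {M : Matrix (Fin n) (Fin n) ℝ} (hM : M.IsSymm) (hMu : IsUnit M)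
    (hN : ∀ v, v ⬝ᵥ (N + M) *ᵥ v ≤ 0) (y : Fin n → ℝ) :
    ∃ z, ∀ y', q y' + (1 / 2) * ((y' - z) ⬝ᵥ M *ᵥ (y' - z)) ≤
      q y + (1 / 2) * ((y - z) ⬝ᵥ M *ᵥ (y - z)) := by
  refine ⟨y + M⁻¹ *ᵥ g y, ?_⟩
  refine (h.add (hasQ_psi hM _)).max_of_crit hN ?_
  have : y - (y + M⁻¹ *ᵥ g y) = -(M⁻¹ *ᵥ g y) := by abel
  simp only [this, mulVec_neg, mulVec_mulVec, mul_nonsing_inv _ ((isUnit_iff_isUnit_det _).1 hMu)]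
  simp

theorem HasQ.nonpos_of_bdd {n : ℕ} {q : (Fin n → ℝ) → ℝ} {g N} (h : HasQ q g N)
    {y : Fin n → ℝ} (hy : g y = 0) {C : ℝ} (hC : ∀ y', q y' ≤ C) (v : Fin n → ℝ) :
    v ⬝ᵥ N *ᵥ v ≤ 0 := by
  refine real_aux (c := q y) (C := C) fun t => ?_
  have h1 := hC (y + t • v)
  rw [h.exp, hy] at h1
  simpa [mulVec_smul] using h1

theorem HasQ.dual' {n : ℕ} {q : (Fin n → ℝ) → ℝ} {g N} (h : HasQ q g N)
    {M : Matrix (Fin n) (Fin n) ℝ} (hM : M.IsSymm) (hMu : IsUnit M) {F : (Fin n → ℝ) → ℝ}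
    (hF : ∀ y z, q y + (1 / 2) * ((y - z) ⬝ᵥ M *ᵥ (y - z)) ≤ F z) (y : Fin n → ℝ) :
    ∃ z, ∀ y', q y' + (1 / 2) * ((y' - z) ⬝ᵥ M *ᵥ (y' - z)) ≤
      q y + (1 / 2) * ((y - z) ⬝ᵥ M *ᵥ (y - z)) := by
  refine h.dual hM hMu ?_ y
  refine (h.add (hasQ_psi hM (y + M⁻¹ *ᵥ g y))).nonpos_of_bdd (y := y) ?_ (fun y' => hF y' _)
  have : y - (y + M⁻¹ *ᵥ g y) = -(M⁻¹ *ᵥ g y) := by abel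
  simp only [this, mulVec_neg, mulVec_mulVec, mul_nonsing_inv _ ((isUnit_iff_isUnit_det _).1 hMu)]
  simp

/-! EReal / DP part -/

theorem ereal_add_iSup {ι : Sort*} (c : ℝ) (f : ι → EReal) :
    (c : EReal) + ⨆ i, f i = ⨆ i, ((c : EReal) + f i) := by
  apply le_antisymm
  · have : (⨆ i, f i) ≤ (⨆ i, ((c : EReal) + f i)) - (c : EReal) := by
      refine iSup_le fun i => ?_
      rw [EReal.le_sub_iff_add_le (by simp) (by simp), add_comm]
      exact le_iSup (fun i => (c : EReal) + f i) i
    rw [EReal.le_sub_iff_add_le (by simp) (by simp), add_comm] at this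
    exact this
  · exact iSup_le fun i => by gcongr; exact le_iSup f i

section
variable {n m : ℕ} (A : Matrix (Fin n) (Fin n) ℝ) (B : Matrix (Fin n) (Fin m) ℝ)
    (Φ : Matrix (Fin n) (Fin n) ℝ) (γ : ℝ)

theorem DP_iSup {ι : Type*} (f : ι → (Fin n → ℝ) → EReal) :
    DP A B Φ γ (⨆ i, f i) = ⨆ i, DP A B Φ γ (f i) := by
  ext x
  simp only [DP, iSup_apply, ereal_add_iSup]
  rw [iSup_comm]

theorem DP_add (c : ℝ) (f : (Fin n → ℝ) → EReal) :
    DP A B Φ γ (fun x => (c : EReal) + f x) = fun x => (c : EReal) + DP A B Φ γ f x := by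
  ext x
  simp only [DP, ereal_add_iSup]
  exact iSup_congr fun w => add_left_comm _ _ _

theorem DPk_iSup {ι : Type*} (k : ℕ) (f : ι → (Fin n → ℝ) → EReal) :
    (DP A B Φ γ)^[k] (⨆ i, f i) = ⨆ i, (DP A B Φ γ)^[k] (f i) := by
  induction k generalizing f with
  | zero => rfl
  | succ k ih => simp only [Function.iterate_succ_apply, DP_iSup, ih]

theorem DPk_add (k : ℕ) (c : ℝ) (f : (Fin n → ℝ) → EReal) :
    (DP A B Φ γ)^[k] (fun x => (c : EReal) + f x) =
      fun x => (c : EReal) + (DP A B Φ γ)^[k] f x := by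
  induction k generalizing f with
  | zero => rfl
  | succ k ih => simp only [Function.iterate_succ_apply, DP_add, ih]

theorem DP_mono : Monotone (DP A B Φ γ) := by
  intro f g h x
  exact iSup_mono fun w => by gcongr; exact h _

theorem DP_quad {M : Matrix (Fin n) (Fin n) ℝ} (hM : M.IsSymm)
    (h0 : (γ ^ 2 • (1 : Matrix (Fin m) (Fin m) ℝ) - Bᵀ * M * B).PosDef) (x : Fin n → ℝ) :
    (((1 / 2) * (x ⬝ᵥ Ric A B Φ γ M *ᵥ x) : ℝ) : EReal) ≤
      DP A B Φ γ (fun x => (((1 / 2) * (x ⬝ᵥ M *ᵥ x) : ℝ) : EReal)) x := by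
  set G := γ ^ 2 • (1 : Matrix (Fin m) (Fin m) ℝ) - Bᵀ * M * B with hG
  set w : Fin m → ℝ := G⁻¹ *ᵥ Bᵀ *ᵥ M *ᵥ A *ᵥ x with hw
  refine le_trans (le_of_eq ?_) (le_iSup _ w)
  rw [← EReal.coe_add]
  congr 1
  have hGw : G *ᵥ w = Bᵀ *ᵥ M *ᵥ A *ᵥ x := by
    rw [hw, mulVec_mulVec, mul_nonsing_inv _ ((isUnit_iff_isUnit_det _).1 h0.isUnit), one_mulVec]
  have e0 : γ ^ 2 • w = Bᵀ *ᵥ M *ᵥ A *ᵥ x + Bᵀ *ᵥ M *ᵥ B *ᵥ w := by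
    rw [← hGw, hG]
    simp [sub_mulVec, ← mulVec_mulVec, smul_mulVec]
  have e1 : γ ^ 2 * (w ⬝ᵥ w) = (B *ᵥ w) ⬝ᵥ M *ᵥ A *ᵥ x + (B *ᵥ w) ⬝ᵥ M *ᵥ B *ᵥ w := by
    have := congrArg (fun u => w ⬝ᵥ u) e0
    simp only [dotProduct_smul, smul_eq_mul, dotProduct_add] at this
    rw [this]
    simp only [dotProduct_mulVec w, vecMul_transpose]
  have e2 : x ⬝ᵥ Ric A B Φ γ M *ᵥ x = x ⬝ᵥ Φ *ᵥ x + (A *ᵥ x) ⬝ᵥ M *ᵥ A *ᵥ x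
      + (A *ᵥ x) ⬝ᵥ M *ᵥ B *ᵥ w := by
    rw [hw]
    simp only [Ric, ← hG, add_mulVec, dotProduct_add, ← mulVec_mulVec]
    simp only [dotProduct_mulVec x, vecMul_transpose]
  rw [e2]
  simp only [mulVec_add, add_dotProduct, dotProduct_add, dotM_symm hM (B *ᵥ w) (A *ᵥ x)] at e1 ⊢
  linarith
end

/-- the primal kernel is an attained infimum -/
theorem pk_spec {n : ℕ} {M : Matrix (Fin n) (Fin n) ℝ} (hM : M.IsSymm)
    {Q : Matrix (Fin n ⊕ Fin n) (Fin n ⊕ Fin n) ℝ} (hQ : Q.IsSymm)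
    (h : (Q.toBlocks₂₂ - M).PosDef) (x y : Fin n → ℝ) :
    (∀ z, primalKernel M Q x y + (1 / 2) * ((z - y) ⬝ᵥ M *ᵥ (z - y)) ≤
      (1 / 2) * (Sum.elim x z ⬝ᵥ Q *ᵥ Sum.elim x z)) ∧
    (∃ z, primalKernel M Q x y + (1 / 2) * ((z - y) ⬝ᵥ M *ᵥ (z - y)) =
      (1 / 2) * (Sum.elim x z ⬝ᵥ Q *ᵥ Sum.elim x z)) := by
  have H := (hasQ_psi hM y).add (hasQ_snd hQ x).neg
  obtain ⟨z0, hz0⟩ := H.exists_max (by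
    have e : -(M + -Q.toBlocks₂₂) = Q.toBlocks₂₂ - M := by abel
    rw [e]; exact h)
  have hs : (⨆ z : Fin n → ℝ,
      (1 / 2) * ((z - y) ⬝ᵥ M *ᵥ (z - y)) -
        (1 / 2) * (Sum.elim x z ⬝ᵥ Q *ᵥ Sum.elim x z)) =
      (1 / 2) * ((z0 - y) ⬝ᵥ M *ᵥ (z0 - y)) -
        (1 / 2) * (Sum.elim x z0 ⬝ᵥ Q *ᵥ Sum.elim x z0) := by
    refine IsLUB.ciSup_eq (IsGreatest.isLUB ⟨⟨z0, rfl⟩, ?_⟩)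
    rintro _ ⟨z, rfl⟩
    simpa [sub_eq_add_neg] using hz0 z
  unfold primalKernel
  rw [hs]
  refine ⟨fun z => ?_, z0, by ring⟩
  have := hz0 z
  linarith

theorem pk_dual {n : ℕ} {M : Matrix (Fin n) (Fin n) ℝ} (hM : M.IsSymm) (hMu : IsUnit M)
    {Q : Matrix (Fin n ⊕ Fin n) (Fin n ⊕ Fin n) ℝ} (hQ : Q.IsSymm)
    (h : (Q.toBlocks₂₂ - M).PosDef) (x z : Fin n → ℝ) :
    ∃ y, primalKernel M Q x y + (1 / 2) * ((z - y) ⬝ᵥ M *ᵥ (z - y)) =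
      (1 / 2) * (Sum.elim x z ⬝ᵥ Q *ᵥ Sum.elim x z) := by
  obtain ⟨y, hy⟩ := (hasQ_snd hQ x).neg.dual hM hMu (fun v => by
    have := pd_nonneg h v
    simp only [sub_mulVec, add_mulVec, neg_mulVec, dotProduct_sub, dotProduct_add,
      dotProduct_neg] at this ⊢
    linarith) z
  refine ⟨y, le_antisymm ((pk_spec hM hQ h x y).1 z) ?_⟩
  obtain ⟨z0, hz0⟩ := (pk_spec hM hQ h x y).2
  have := hy z0
  linarith

theorem psi_comm {n : ℕ} (M : Matrix (Fin n) (Fin n) ℝ) (u v : Fin n → ℝ) :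
    (u - v) ⬝ᵥ M *ᵥ (u - v) = (v - u) ⬝ᵥ M *ᵥ (v - u) := by
  rw [← neg_sub v u, mulVec_neg, neg_dotProduct_neg]

theorem starProd_symm {n : ℕ} {T₁ T₂ : Matrix (Fin n ⊕ Fin n) (Fin n ⊕ Fin n) ℝ}
    (h₁ : T₁.IsSymm) (h₂ : T₂.IsSymm) : (starProd T₁ T₂).IsSymm := by
  have hP : (T₁.toBlocks₂₂ + T₂.toBlocks₁₁)⁻¹ᵀ = (T₁.toBlocks₂₂ + T₂.toBlocks₁₁)⁻¹ := by
    rw [transpose_nonsing_inv, transpose_add, (b22 h₁).eq, (b11 h₂).eq]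
  unfold starProd Matrix.IsSymm
  rw [fromBlocks_transpose, b21 h₁, b21 h₂]
  simp only [transpose_sub, transpose_neg, transpose_mul, transpose_transpose, hP,
    (b22 h₁).eq, (b11 h₂).eq, (b11 h₁).eq, (b22 h₂).eq, Matrix.mul_assoc]

theorem star_spec {n : ℕ} {T₁ T₂ : Matrix (Fin n ⊕ Fin n) (Fin n ⊕ Fin n) ℝ}
    (h₁ : T₁.IsSymm) (h₂ : T₂.IsSymm) (hneg : (-(T₁.toBlocks₂₂ + T₂.toBlocks₁₁)).PosDef)
    (x y : Fin n → ℝ) :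
    IsGreatest (Set.range fun ρ : Fin n → ℝ => (1 / 2) * (Sum.elim x ρ ⬝ᵥ T₁ *ᵥ Sum.elim x ρ) +
      (1 / 2) * (Sum.elim ρ y ⬝ᵥ T₂ *ᵥ Sum.elim ρ y))
      ((1 / 2) * (Sum.elim x y ⬝ᵥ starProd T₁ T₂ *ᵥ Sum.elim x y)) := by
  have H := (hasQ_snd h₁ x).add (hasQ_fst h₂ y)
  have hu : IsUnit (T₁.toBlocks₂₂ + T₂.toBlocks₁₁) := by simpa using hneg.isUnit.neg
  have hc := H.crit hu
  have hmax := H.max_of_crit (fun v => by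
    have := pd_nonneg hneg v
    rw [neg_mulVec, dotProduct_neg] at this
    linarith) hc
  have hP : (T₁.toBlocks₂₂ + T₂.toBlocks₁₁)⁻¹.IsSymm := by
    unfold Matrix.IsSymm
    rw [transpose_nonsing_inv, transpose_add, (b22 h₁).eq, (b11 h₂).eq]
  set P := T₁.toBlocks₂₂ + T₂.toBlocks₁₁ with hPdef
  have key := H.crit_val hu
  have val := key
  replace val := val.trans (b := _) (c := (1 / 2) * (Sum.elim x y ⬝ᵥ starProd T₁ T₂ *ᵥ Sum.elim x y)) (by
    symm
    rw [qform (starProd_symm h₁ h₂), qform h₁, qform h₂]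
    simp only [starProd, toBlocks_fromBlocks₁₁, toBlocks_fromBlocks₁₂, toBlocks_fromBlocks₂₂,
      ← hPdef, mulVec_zero, dotProduct_zero, zero_dotProduct, add_zero, zero_add, sub_mulVec,
      neg_mulVec, ← mulVec_mulVec, dotProduct_sub, dotProduct_neg, mulVec_add, dotProduct_add,
      add_dotProduct]
    have a1 : ∀ u : Fin n → ℝ, x ⬝ᵥ T₁.toBlocks₁₂ *ᵥ u = u ⬝ᵥ T₁.toBlocks₂₁ *ᵥ x := fun u => by
      rw [b21 h₁, dotM_tr]
    have a2 : ∀ u : Fin n → ℝ, y ⬝ᵥ T₂.toBlocks₂₁ *ᵥ u = u ⬝ᵥ T₂.toBlocks₁₂ *ᵥ y := fun u => by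
      rw [b21 h₂, dotM_tr]
    have a3 : ∀ u v : Fin n → ℝ, (P⁻¹ *ᵥ u) ⬝ᵥ v = (P⁻¹ *ᵥ v) ⬝ᵥ u := fun u v => by
      rw [dotProduct_comm, dotM_symm hP, dotProduct_comm]
    rw [a1, a2, a1, a3 (T₂.toBlocks₁₂ *ᵥ y) (T₁.toBlocks₂₁ *ᵥ x)]
    ring)
  rw [← val]
  refine ⟨⟨_, rfl⟩, ?_⟩
  rintro _ ⟨ρ, rfl⟩
  exact hmax ρ

theorem symm_ext {N : Type*} [Fintype N] [DecidableEq N] {S T : Matrix N N ℝ} (hS : S.IsSymm)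
    (hT : T.IsSymm) (h : ∀ v : N → ℝ, v ⬝ᵥ S *ᵥ v = v ⬝ᵥ T *ᵥ v) : S = T := by
  ext i j
  have h1 := h (Pi.single i 1 + Pi.single j 1)
  have h2 := h (Pi.single i 1)
  have h3 := h (Pi.single j 1)
  have h4 := hS.apply i j
  have h5 := hT.apply i j
  simp [mulVec_add, add_dotProduct, dotProduct_add] at h1 h2 h3
  linarith

/-- Semigroup property of the primal kernels:
`S_{k₁+k₂}(x,y) = sup_ρ {S_{k₁}(x,ρ) + S_{k₂}(ρ,y)}` and `Λ_{k₁+k₂} = Λ_{k₁} ⊛ Λ_{k₂}`. -/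
theorem primal_kernel_semigroup {n m : ℕ}
    (A : Matrix (Fin n) (Fin n) ℝ) (B : Matrix (Fin n) (Fin m) ℝ)
    (Φ : Matrix (Fin n) (Fin n) ℝ) (hΦsymm : Φ.IsSymm) (hΦ : Φ.PosDef)
    (γ : ℝ) (hγ : 0 < γ)
    (M : Matrix (Fin n) (Fin n) ℝ) (hMsymm : M.IsSymm)
    (hM1 : ∀ k : ℕ,
      (γ ^ 2 • (1 : Matrix (Fin m) (Fin m) ℝ) - Bᵀ * ((Ric A B Φ γ)^[k] M) * B).PosDef)
    (hM2 : (Ric A B Φ γ M - M).PosDef)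
    (hM3 : (M * B * (γ ^ 2 • (1 : Matrix (Fin m) (Fin m) ℝ) - Bᵀ * M * B)⁻¹ * Bᵀ * M).PosDef)
    (k₁ k₂ : ℕ) (hk₁ : 1 ≤ k₁) (hk₂ : 1 ≤ k₂)
    (Q₁ Q₂ Q₃ : Matrix (Fin n ⊕ Fin n) (Fin n ⊕ Fin n) ℝ)
    (hQ₁symm : Q₁.IsSymm) (hQ₂symm : Q₂.IsSymm) (hQ₃symm : Q₃.IsSymm)
    -- `Ŝ_k` is finite and quadratic with Hessian `Q_k` for `k ∈ {k₁, k₂, k₁+k₂}`: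
    (hQ₁ : ∀ x z : Fin n → ℝ,
      (DP A B Φ γ)^[k₁]
          (fun x' => (((1 / 2) * ((x' - z) ⬝ᵥ M *ᵥ (x' - z)) : ℝ) : EReal)) x =
        (((1 / 2) * (Sum.elim x z ⬝ᵥ Q₁ *ᵥ Sum.elim x z) : ℝ) : EReal))
    (hQ₂ : ∀ x z : Fin n → ℝ,
      (DP A B Φ γ)^[k₂]
          (fun x' => (((1 / 2) * ((x' - z) ⬝ᵥ M *ᵥ (x' - z)) : ℝ) : EReal)) x =
        (((1 / 2) * (Sum.elim x z ⬝ᵥ Q₂ *ᵥ Sum.elim x z) : ℝ) : EReal))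
    (hQ₃ : ∀ x z : Fin n → ℝ,
      (DP A B Φ γ)^[k₁ + k₂]
          (fun x' => (((1 / 2) * ((x' - z) ⬝ᵥ M *ᵥ (x' - z)) : ℝ) : EReal)) x =
        (((1 / 2) * (Sum.elim x z ⬝ᵥ Q₃ *ᵥ Sum.elim x z) : ℝ) : EReal))
    (hQ₁22 : (Q₁.toBlocks₂₂ - M).PosDef) (hQ₂22 : (Q₂.toBlocks₂₂ - M).PosDef)
    (hQ₃22 : (Q₃.toBlocks₂₂ - M).PosDef)
    (Λ₁ Λ₂ Λ₃ : Matrix (Fin n ⊕ Fin n) (Fin n ⊕ Fin n) ℝ)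
    (hΛ₁symm : Λ₁.IsSymm) (hΛ₂symm : Λ₂.IsSymm) (hΛ₃symm : Λ₃.IsSymm)
    -- the primal kernels are quadratic with Hessians `Λ_k`:
    (hΛ₁ : ∀ x y : Fin n → ℝ,
      primalKernel M Q₁ x y = (1 / 2) * (Sum.elim x y ⬝ᵥ Λ₁ *ᵥ Sum.elim x y))
    (hΛ₂ : ∀ x y : Fin n → ℝ,
      primalKernel M Q₂ x y = (1 / 2) * (Sum.elim x y ⬝ᵥ Λ₂ *ᵥ Sum.elim x y))
    (hΛ₃ : ∀ x y : Fin n → ℝ,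
      primalKernel M Q₃ x y = (1 / 2) * (Sum.elim x y ⬝ᵥ Λ₃ *ᵥ Sum.elim x y))
    (hneg : (-(Λ₁.toBlocks₂₂ + Λ₂.toBlocks₁₁)).PosDef) :
    (∀ x y : Fin n → ℝ,
        primalKernel M Q₃ x y =
          ⨆ ρ : Fin n → ℝ, primalKernel M Q₁ x ρ + primalKernel M Q₂ ρ y) ∧
      Λ₃ = starProd Λ₁ Λ₂ := by
  have hMu : IsUnit M := by
    have := hM3.isUnit
    rw [isUnit_iff_isUnit_det, det_mul] at this
    exact (isUnit_iff_isUnit_det _).2 (isUnit_of_mul_isUnit_right this)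
  have P₁ := pk_spec hMsymm hQ₁symm hQ₁22
  have P₂ := pk_spec hMsymm hQ₂symm hQ₂22
  have P₃ := pk_spec hMsymm hQ₃symm hQ₃22
  have D₁ := pk_dual hMsymm hMu hQ₁symm hQ₁22
  have D₂ := pk_dual hMsymm hMu hQ₂symm hQ₂22
  have hT : ∀ x y, IsGreatest (Set.range fun ρ => primalKernel M Q₁ x ρ + primalKernel M Q₂ ρ y)
      ((1 / 2) * (Sum.elim x y ⬝ᵥ starProd Λ₁ Λ₂ *ᵥ Sum.elim x y)) := by
    intro x y
    simp only [hΛ₁, hΛ₂]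
    exact star_spec hΛ₁symm hΛ₂symm hneg x y
  -- the Hessian of the second value function dominates `M`
  have h11 : ∀ v, 0 ≤ v ⬝ᵥ (Q₂.toBlocks₁₁ - M) *ᵥ v := by
    intro v
    set f0 : (Fin n → ℝ) → EReal := fun x => (((1 / 2) * (x ⬝ᵥ M *ᵥ x) : ℝ) : EReal) with hf0
    have hle : f0 ≤ DP A B Φ γ f0 := by
      intro x
      refine le_trans ?_ (DP_quad A B Φ γ hMsymm (hM1 0) x)
      have := pd_nonneg hM2 x
      rw [sub_mulVec, dotProduct_sub] at this
      exact EReal.coe_le_coe_iff.2 (by linarith)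
    have hmono : f0 ≤ (DP A B Φ γ)^[k₂] f0 :=
      (DP_mono A B Φ γ).monotone_iterate_of_le_map hle (Nat.zero_le k₂)
    have h1 := hmono v
    have h2 := hQ₂ v 0
    simp only [sub_zero] at h2
    rw [h2] at h1
    have h3 := EReal.coe_le_coe_iff.1 h1
    rw [qform hQ₂symm] at h3
    simp only [mulVec_zero, dotProduct_zero, zero_dotProduct] at h3
    rw [sub_mulVec, dotProduct_sub]
    linarith
  -- representation of the third value function
  have hrep : ∀ x z, IsLUB (Set.range fun ρ => primalKernel M Q₁ x ρ +
      (1 / 2) * (Sum.elim ρ z ⬝ᵥ Q₂ *ᵥ Sum.elim ρ z))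
      ((1 / 2) * (Sum.elim x z ⬝ᵥ Q₃ *ᵥ Sum.elim x z)) := by
    intro x z
    have hd := (hasQ_fst hQ₂symm z).neg.dual hMsymm hMu (fun v => by
      have := h11 v
      simp only [sub_mulVec, add_mulVec, neg_mulVec, dotProduct_sub, dotProduct_add,
        dotProduct_neg] at this ⊢
      linarith)
    choose r hr using hd
    have hφ : (fun x' => (((1 / 2) * (Sum.elim x' z ⬝ᵥ Q₂ *ᵥ Sum.elim x' z) : ℝ) : EReal)) =
        ⨆ ρ : Fin n → ℝ, fun x' => (((1 / 2) * (Sum.elim ρ z ⬝ᵥ Q₂ *ᵥ Sum.elim ρ z) -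
          (1 / 2) * ((ρ - r ρ) ⬝ᵥ M *ᵥ (ρ - r ρ)) : ℝ) : EReal) +
          (((1 / 2) * ((x' - r ρ) ⬝ᵥ M *ᵥ (x' - r ρ)) : ℝ) : EReal) := by
      ext x'
      rw [iSup_apply]
      apply le_antisymm
      · refine le_trans (le_of_eq ?_) (le_iSup _ x')
        rw [← EReal.coe_add]
        congr 1
        ring
      · refine iSup_le fun ρ => ?_
        rw [← EReal.coe_add]
        have := hr ρ x'
        exact EReal.coe_le_coe_iff.2 (by linarith)
    have hF := hQ₃ x z
    rw [Function.iterate_add_apply, funext (fun x' => hQ₂ x' z), hφ, DPk_iSup, iSup_apply] at hF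
    simp only [DPk_add, hQ₁] at hF
    simp only [← EReal.coe_add] at hF
    constructor
    · rintro _ ⟨ρ, rfl⟩
      have h1 := (le_iSup (fun ρ : Fin n → ℝ => (((1 / 2) * (Sum.elim ρ z ⬝ᵥ Q₂ *ᵥ Sum.elim ρ z) -
          (1 / 2) * ((ρ - r ρ) ⬝ᵥ M *ᵥ (ρ - r ρ)) + (1 / 2) * (Sum.elim x (r ρ) ⬝ᵥ Q₁ *ᵥ Sum.elim x (r ρ)) : ℝ) : EReal)) ρ).trans hF.le
      have h2 := EReal.coe_le_coe_iff.1 h1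
      have h3 := (P₁ x ρ).1 (r ρ)
      rw [psi_comm M (r ρ) ρ] at h3
      simp only
      linarith
    · intro U hU
      refine EReal.coe_le_coe_iff.1 (hF.symm.le.trans (iSup_le fun ρ => EReal.coe_le_coe_iff.2 ?_))
      obtain ⟨y, hy⟩ := D₁ x (r ρ)
      have h1 := hU ⟨y, rfl⟩
      have h2 := hr ρ y
      rw [psi_comm M (r ρ) y] at hy
      simp only at h1
      linarith
  have hlow : ∀ x y z, (1 / 2) * (Sum.elim x y ⬝ᵥ starProd Λ₁ Λ₂ *ᵥ Sum.elim x y) +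
      (1 / 2) * ((y - z) ⬝ᵥ M *ᵥ (y - z)) ≤
      (1 / 2) * (Sum.elim x z ⬝ᵥ Q₃ *ᵥ Sum.elim x z) := by
    intro x y z
    obtain ⟨ρ, hρ⟩ := (hT x y).1
    have h1 := (hrep x z).1 ⟨ρ, rfl⟩
    have h2 := (P₂ ρ y).1 z
    rw [psi_comm M z y] at h2
    simp only at hρ h1
    linarith
  have hmain : ∀ x y, primalKernel M Q₃ x y =
      (1 / 2) * (Sum.elim x y ⬝ᵥ starProd Λ₁ Λ₂ *ᵥ Sum.elim x y) := by
    intro x y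
    apply le_antisymm
    · obtain ⟨z, hz⟩ := (hasQ_snd (starProd_symm hΛ₁symm hΛ₂symm) x).dual' hMsymm hMu (hlow x) y
      have h1 := (P₃ x y).1 z
      have h2 : (1 / 2) * (Sum.elim x z ⬝ᵥ Q₃ *ᵥ Sum.elim x z) ≤
          (1 / 2) * (Sum.elim x y ⬝ᵥ starProd Λ₁ Λ₂ *ᵥ Sum.elim x y) +
          (1 / 2) * ((y - z) ⬝ᵥ M *ᵥ (y - z)) := by
        refine (hrep x z).2 ?_
        rintro _ ⟨ρ, rfl⟩
        obtain ⟨y', hy'⟩ := D₂ ρ z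
        have h3 := hz y'
        have h4 := (hT x y').2 ⟨ρ, rfl⟩
        rw [psi_comm M z y'] at hy'
        simp only at h4 ⊢
        linarith
      rw [psi_comm M z y] at h1
      linarith
    · obtain ⟨z, hz⟩ := (P₃ x y).2
      have := hlow x y z
      rw [psi_comm M z y] at hz
      linarith
  refine ⟨fun x y => ?_, ?_⟩
  · rw [hmain x y]
    exact (hT x y).isLUB.ciSup_eq.symm
  · refine symm_ext hΛ₃symm (starProd_symm hΛ₁symm hΛ₂symm) fun v => ?_
    have h1 := hmain (v ∘ Sum.inl) (v ∘ Sum.inr)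
    rw [hΛ₃, Sum.elim_comp_inl_inr] at h1
    linarith
end
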